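/- There exists a numeral system which possesses a closed λ-term for Predecessor and a closed λ-term for Zero Test, but which possesses no closed λ-term for Successor. -/

import Mathlib

/-- Untyped λ-terms in de Bruijn notation. -/
inductive Lam : Type
  | var : ℕ → Lam
  | app : Lam → Lam → Lam
  | lam : Lam → Lam
  deriving DecidableEq

namespace Lam

/-- Shift by one the free variables with index ≥ `d`. -/
def lift (d : ℕ) : Lam → Lam
  | var n => if n < d then var n else var (n + 1)
  | app M N => app (lift d M) (lift d N)
  | lam M => lam (lift (d + 1) M)

/-- Capture-avoiding substitution of `N` for the free variable of index `n`. -/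
def subst : Lam → ℕ → Lam → Lam
  | var m, n, N => if m = n then N else if n < m then var (m - 1) else var m
  | app M₁ M₂, n, N => app (subst M₁ n N) (subst M₂ n N)
  | lam M, n, N => lam (subst M (n + 1) (lift 0 N))

/-- One-step β-reduction (contraction of a β-redex anywhere in the term). -/
inductive Step : Lam → Lam → Prop
  | beta (M N : Lam) : Step (app (lam M) N) (subst M 0 N)
  | appL {M M' : Lam} (N : Lam) : Step M M' → Step (app M N) (app M' N)
  | appR (M : Lam) {N N' : Lam} : Step N N' → Step (app M N) (app M N')
  | lam {M M' : Lam} : Step M M' → Step (Lam.lam M) (Lam.lam M')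

/-- β-equivalence: the equivalence relation generated by one-step β-reduction. -/
def BetaEq : Lam → Lam → Prop := Relation.EqvGen Step

/-- The variable of index `n` occurs free in the term. -/
def HasFree : Lam → ℕ → Prop
  | var m, n => m = n
  | app M N, n => HasFree M n ∨ HasFree N n
  | lam M, n => HasFree M (n + 1)

/-- A term is closed if it has no free variables. -/
def Closed (M : Lam) : Prop := ∀ n, ¬ HasFree M n

/-- A term is β-normal: it contains no β-redex. -/
def IsBetaNormal : Lam → Prop
  | app (lam _) _ => False
  | app M N => IsBetaNormal M ∧ IsBetaNormal N
  | lam M => IsBetaNormal M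
  | var _ => True

/-- A term is βη-normal: it contains no β-redex and no η-redex
`λx.(M x)` with `x` not free in `M`. -/
def IsBetaEtaNormal : Lam → Prop
  | app (lam _) _ => False
  | app M N => IsBetaEtaNormal M ∧ IsBetaEtaNormal N
  | lam (app M (var 0)) => HasFree M 0 ∧ IsBetaEtaNormal (app M (var 0))
  | lam M => IsBetaEtaNormal M
  | var _ => True

/-- `I = λx.x`. -/
def I : Lam := lam (var 0)

/-- `T = λxλy.x`. -/
def T : Lam := lam (lam (var 1))

/-- `F = λxλy.y`. -/
def F : Lam := lam (lam (var 0))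

/-- The pair `<M,N> = λx.(x M N)` (the binder shifts the free variables of `M,N`). -/
def pair (M N : Lam) : Lam := lam (app (app (var 0) (lift 0 M)) (lift 0 N))

end Lam

/-!
Stack a sequence `t` of terms into numerals `d₀ = λx.T`, `dₙ₊₁ = ⟨tₙ, dₙ⟩`. Whatever `t` is, second
projection is a predecessor, and applying a numeral to the constant function `λxλy.F` tests for
zero. A successor, however, rebuilds the whole system from `d₀`, hence determines every `tₙ` up to
β-equivalence. There are uncountably many `t : ℕ → {T, F}` but only countably many λ-terms, so some
`t` admits no successor.

That distinct `t` stay distinct up to β-equivalence rests on `T ≄β F`, which is read off a graph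
model of the λ-calculus.
-/

namespace Lam

infix:50 " ≃β " => BetaEq

/-! ### β-equivalence -/

namespace BetaEq

variable {M N K : Lam}

theorem refl (M : Lam) : M ≃β M :=
  Relation.EqvGen.refl M

theorem symm (h : M ≃β N) : N ≃β M :=
  Relation.EqvGen.symm _ _ h

theorem trans (h : M ≃β N) (h' : N ≃β K) : M ≃β K :=
  Relation.EqvGen.trans _ _ _ h h'

instance : Trans BetaEq BetaEq BetaEq := ⟨trans⟩

theorem beta (M N : Lam) : app (lam M) N ≃β subst M 0 N :=
  Relation.EqvGen.rel _ _ (Step.beta M N)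

theorem app_left (h : M ≃β N) (K : Lam) : app M K ≃β app N K := by
  induction h with
  | rel _ _ h => exact Relation.EqvGen.rel _ _ (Step.appL K h)
  | refl M => exact refl _
  | symm _ _ _ ih => exact ih.symm
  | trans _ _ _ _ _ ih ih' => exact ih.trans ih'

theorem app_right (K : Lam) (h : M ≃β N) : app K M ≃β app K N := by
  induction h with
  | rel _ _ h => exact Relation.EqvGen.rel _ _ (Step.appR K h)
  | refl M => exact refl _
  | symm _ _ _ ih => exact ih.symm
  | trans _ _ _ _ _ ih ih' => exact ih.trans ih'

end BetaEq

theorem subst_lift (M N : Lam) (k : ℕ) : subst (lift k M) k N = M := by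
  induction M generalizing k N with
  | var m =>
    rcases lt_or_ge m k with h | h
    · simp [lift, subst, h, h.ne, h.not_gt]
    · simp [lift, subst, h.not_gt, Nat.lt_succ_of_le h, (Nat.lt_succ_of_le h).ne']
  | app M₁ M₂ ih₁ ih₂ => simp only [lift, subst, ih₁, ih₂]
  | lam M ih => simp only [lift, subst, ih]

theorem lift_injective (k : ℕ) : Function.Injective (lift k) :=
  Function.LeftInverse.injective (g := fun M => subst M k (var 0)) fun M => subst_lift M (var 0) k

theorem betaEq_const_app (M N : Lam) : app (lam (lift 0 M)) N ≃β M := by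
  simpa only [subst_lift] using BetaEq.beta (lift 0 M) N

theorem betaEq_T_app (M N : Lam) : app (app T M) N ≃β M :=
  calc
    app (app T M) N ≃β app (lam (lift 0 M)) N := (BetaEq.beta (lam (var 1)) M).app_left N
    _ ≃β M := betaEq_const_app M N

theorem betaEq_F_app (M N : Lam) : app (app F M) N ≃β N :=
  calc
    app (app F M) N ≃β app I N := (BetaEq.beta (lam (var 0)) M).app_left N
    _ ≃β N := BetaEq.beta (var 0) N

theorem betaEq_pair_app (M N K : Lam) : app (pair M N) K ≃β app (app K M) N := by
  simpa [pair, subst, subst_lift] using BetaEq.beta (app (app (var 0) (lift 0 M)) (lift 0 N)) K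

/-- Evaluation at `K`, that is `λx.(x K)`. -/
def evalAt (K : Lam) : Lam := lam (app (var 0) (lift 0 K))

theorem betaEq_evalAt_app (K M : Lam) : app (evalAt K) M ≃β app M K := by
  simpa [evalAt, subst, subst_lift] using BetaEq.beta (app (var 0) (lift 0 K)) M

/-! ### Closed and βη-normal terms -/

theorem lift_eq_self {M : Lam} {k : ℕ} (h : ∀ m, k ≤ m → ¬ HasFree M m) : lift k M = M := by
  induction M generalizing k with
  | var m =>
    have hm : m < k := not_le.mp fun hkm => h m hkm rfl
    simp only [lift, hm, if_true]
  | app M N ihM ihN =>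
    rw [lift, ihM fun m hm hf => h m hm (Or.inl hf), ihN fun m hm hf => h m hm (Or.inr hf)]
  | lam M ih =>
    rw [lift, ih]
    rintro (_ | m) hm
    · exact absurd hm (Nat.not_succ_le_zero k)
    · exact h m (Nat.le_of_succ_le_succ hm)

theorem Closed.lift_eq {M : Lam} (h : Closed M) (k : ℕ) : lift k M = M :=
  lift_eq_self fun m _ => h m

theorem closed_T : Closed T := by simp [Closed, T, HasFree]

theorem closed_F : Closed F := by simp [Closed, F, HasFree]

theorem Closed.lam {M : Lam} (h : Closed M) : Closed (lam M) :=
  fun n => h (n + 1)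

theorem Closed.evalAt {K : Lam} (h : Closed K) : Closed (evalAt K) := by
  rintro n (h₀ | hK)
  · exact Nat.noConfusion h₀
  · exact h (n + 1) (h.lift_eq 0 ▸ hK)

theorem Closed.pair {M N : Lam} (hM : Closed M) (hN : Closed N) : Closed (pair M N) := by
  rintro n ((h₀ | hM') | hN')
  · exact Nat.noConfusion h₀
  · exact hM (n + 1) (hM.lift_eq 0 ▸ hM')
  · exact hN (n + 1) (hN.lift_eq 0 ▸ hN')

theorem isBetaEtaNormal_T : IsBetaEtaNormal T := by simp [T, IsBetaEtaNormal]

theorem isBetaEtaNormal_F : IsBetaEtaNormal F := by simp [F, IsBetaEtaNormal]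

theorem IsBetaEtaNormal.pair {M N : Lam} (hMc : Closed M) (hM : IsBetaEtaNormal M)
    (hNc : Closed N) (hN : IsBetaEtaNormal N) : IsBetaEtaNormal (pair M N) := by
  rw [Lam.pair, hMc.lift_eq, hNc.lift_eq]
  cases N with
  | var n => exact absurd rfl (hNc n)
  | app N₁ N₂ => exact ⟨⟨trivial, hM⟩, hN⟩
  | lam N => exact ⟨⟨trivial, hM⟩, hN⟩

theorem pair_inj {M M' N N' : Lam} : pair M N = pair M' N' ↔ M = M' ∧ N = N' := by
  simp [pair, (lift_injective 0).eq_iff]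

/-! ### Graph models -/

section GraphModel

/-- The sequence `ρ` with `x` inserted at position `k`: the environment seen under a binder when
`k = 0`, and the one seen by a term in which the variable `k` is to be substituted. -/
def insertAt {α : Type*} (k : ℕ) (x : α) (ρ : ℕ → α) (m : ℕ) : α :=
  if m = k then x else if k < m then ρ (m - 1) else ρ m

theorem insertAt_succ_insertAt_zero {α : Type*} (k : ℕ) (x y : α) (ρ : ℕ → α) :
    insertAt (k + 1) x (insertAt 0 y ρ) = insertAt 0 y (insertAt k x ρ) := by
  funext m
  rcases m with _ | _ | m <;> simp [insertAt, eq_comm]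

theorem insertAt_mono {α : Type*} [Preorder α] (k : ℕ) {x y : α} {ρ σ : ℕ → α}
    (hxy : x ≤ y) (h : ρ ≤ σ) : insertAt k x ρ ≤ insertAt k y σ := by
  intro m
  simp only [insertAt]
  split_ifs
  exacts [hxy, h _, h _]

variable {D : Type*} (e : Finset D × D ↪ D)

/-- The interpretation of a term in the graph model given by the coding `e`: a function on `Set D`
is represented by the codes of those `(a, b)` for which `b` lies in its value at the finite
set `a`. -/
def interp : Lam → (ℕ → Set D) → Set D
  | var n, ρ => ρ n
  | app M N, ρ => {b | ∃ a : Finset D, ↑a ⊆ interp N ρ ∧ e (a, b) ∈ interp M ρ}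
  | lam M, ρ => {c | ∃ (a : Finset D) (b : D), e (a, b) = c ∧ b ∈ interp M (insertAt 0 ↑a ρ)}

variable {e}

theorem mem_interp_lam {M : Lam} {ρ : ℕ → Set D} {a : Finset D} {b : D} :
    e (a, b) ∈ interp e (lam M) ρ ↔ b ∈ interp e M (insertAt 0 ↑a ρ) := by
  simp [interp]

theorem interp_mono (M : Lam) : Monotone (interp e M) := by
  induction M with
  | var n => exact fun ρ σ h => h n
  | app M N ihM ihN =>
    rintro ρ σ h b ⟨a, ha, hb⟩
    exact ⟨a, ha.trans (ihN h), ihM h hb⟩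
  | lam M ih =>
    rintro ρ σ h _ ⟨a, b, rfl, hb⟩
    exact ⟨a, b, rfl, ih (insertAt_mono 0 le_rfl h) hb⟩

/-- Continuity of a function of environments: each element of a value `f ρ` is already produced by
finite parts of the sets `ρ n`. -/
def FinitelyDetermined (f : (ℕ → Set D) → Set D) : Prop :=
  ∀ ⦃ρ b⦄, b ∈ f ρ → ∃ σ : ℕ → Finset D, (fun n => (σ n : Set D)) ≤ ρ ∧ b ∈ f fun n => ↑(σ n)

open scoped Classical in
theorem FinitelyDetermined.exists_subset {f : (ℕ → Set D) → Set D} (hf : FinitelyDetermined f)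
    (hmono : Monotone f) {ρ : ℕ → Set D} {a : Finset D} (ha : ↑a ⊆ f ρ) :
    ∃ σ : ℕ → Finset D, (fun n => (σ n : Set D)) ≤ ρ ∧ ↑a ⊆ f fun n => ↑(σ n) := by
  induction a using Finset.induction_on with
  | empty => exact ⟨fun _ => ∅, fun n => by simp, by simp⟩
  | insert b a _ ih =>
    rw [Finset.coe_insert, Set.insert_subset_iff] at ha
    obtain ⟨σ, hσρ, hσ⟩ := hf ha.1
    obtain ⟨τ, hτρ, hτ⟩ := ih ha.2
    refine ⟨σ ⊔ τ, fun n => by simpa using ⟨hσρ n, hτρ n⟩, ?_⟩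
    rw [Finset.coe_insert, Set.insert_subset_iff]
    exact ⟨hmono (fun n => by simp) hσ, hτ.trans (hmono fun n => by simp)⟩

open scoped Classical in
theorem finitelyDetermined_interp (M : Lam) : FinitelyDetermined (interp e M) := by
  induction M with
  | var k =>
    intro ρ b hb
    refine ⟨Function.update ⊥ k {b}, fun n => ?_, by simp [interp]⟩
    obtain rfl | hn := eq_or_ne n k
    · simpa [interp] using hb
    · simp [hn]
  | app M N ihM ihN =>
    rintro ρ b ⟨a, ha, hb⟩
    obtain ⟨σ, hσρ, hσ⟩ := ihM hb
    obtain ⟨τ, hτρ, hτ⟩ := ihN.exists_subset (interp_mono N) ha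
    exact ⟨σ ⊔ τ, fun n => by simpa using ⟨hσρ n, hτρ n⟩, a,
      hτ.trans (interp_mono N fun n => by simp), interp_mono M (fun n => by simp) hσ⟩
  | lam M ih =>
    rintro ρ _ ⟨a, b, rfl, hb⟩
    obtain ⟨σ, hσρ, hσ⟩ := ih hb
    refine ⟨fun n => σ (n + 1), fun n => hσρ (n + 1), a, b, rfl, interp_mono M ?_ hσ⟩
    rintro (_ | n)
    exacts [hσρ 0, le_rfl]

theorem interp_lift (M : Lam) (k : ℕ) (X : Set D) (ρ : ℕ → Set D) :
    interp e (lift k M) (insertAt k X ρ) = interp e M ρ := by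
  induction M generalizing k ρ with
  | var m =>
    rcases lt_or_ge m k with h | h
    · simp [lift, interp, insertAt, h, h.ne, h.not_gt]
    · simp [lift, interp, insertAt, h.not_gt, Nat.lt_succ_of_le h, (Nat.lt_succ_of_le h).ne']
  | app M N ihM ihN => simp only [lift, interp, ihM, ihN]
  | lam M ih => simp only [lift, interp, ← insertAt_succ_insertAt_zero, ih]

theorem interp_subst (M N : Lam) (k : ℕ) (ρ : ℕ → Set D) :
    interp e (subst M k N) ρ = interp e M (insertAt k (interp e N ρ) ρ) := by
  induction M generalizing k N ρ with
  | var m => simp only [subst, interp, insertAt]; split_ifs <;> rfl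
  | app M₁ M₂ ih₁ ih₂ => simp only [subst, interp, ih₁, ih₂]
  | lam M ih => simp only [subst, interp, ih, interp_lift, insertAt_succ_insertAt_zero]

theorem interp_beta (M N : Lam) : interp e (app (lam M) N) = interp e (subst M 0 N) := by
  ext ρ b
  rw [interp_subst]
  constructor
  · rintro ⟨a, ha, hb⟩
    exact interp_mono M (insertAt_mono 0 ha le_rfl) (mem_interp_lam.mp hb)
  · intro hb
    obtain ⟨σ, hσρ, hσ⟩ := finitelyDetermined_interp M hb
    refine ⟨σ 0, hσρ 0, mem_interp_lam.mpr (interp_mono M ?_ hσ)⟩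
    rintro (_ | n)
    exacts [le_rfl, hσρ (n + 1)]

theorem Step.interp_eq {M N : Lam} (h : Step M N) : interp e M = interp e N := by
  induction h with
  | beta M N => exact interp_beta M N
  | appL N _ ih => ext; simp only [interp, ih]
  | appR M _ ih => ext; simp only [interp, ih]
  | lam _ ih => ext; simp only [interp, ih]

theorem BetaEq.interp_eq {M N : Lam} (h : M ≃β N) : interp e M = interp e N := by
  induction h with
  | rel _ _ h => exact h.interp_eq
  | refl M => rfl
  | symm _ _ _ ih => exact ih.symm
  | trans _ _ _ _ _ ih ih' => exact ih.trans ih'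

theorem interp_T_ne_interp_F [Nonempty D] : interp e T ≠ interp e F := by
  obtain ⟨b⟩ := ‹Nonempty D›
  intro h
  have hT : e ({b}, e (∅, b)) ∈ interp e T fun _ => ∅ := by
    simp [T, interp, insertAt]
  simp [h, F, interp, insertAt] at hT

end GraphModel

theorem not_betaEq_T_F : ¬ T ≃β F :=
  fun h => interp_T_ne_interp_F (e := Encodable.encode' (Finset ℕ × ℕ)) h.interp_eq

/-! ### Towers of pairs -/

/-- The numeral system `λx.T, ⟨t₀, λx.T⟩, ⟨t₁, ⟨t₀, λx.T⟩⟩, …` that records the sequence `t`. -/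
def tower (t : ℕ → Lam) : ℕ → Lam
  | 0 => lam T
  | n + 1 => pair (t n) (tower t n)

theorem closed_tower {t : ℕ → Lam} (ht : ∀ n, Closed (t n)) (n : ℕ) : Closed (tower t n) := by
  induction n with
  | zero => exact closed_T.lam
  | succ n ih => exact (ht n).pair ih

theorem isBetaEtaNormal_tower {t : ℕ → Lam} (htc : ∀ n, Closed (t n))
    (ht : ∀ n, IsBetaEtaNormal (t n)) (n : ℕ) : IsBetaEtaNormal (tower t n) := by
  induction n with
  | zero => simp [tower, T, IsBetaEtaNormal]
  | succ n ih => exact (ht n).pair (htc n) (closed_tower htc n) ih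

theorem tower_injective (t : ℕ → Lam) : Function.Injective (tower t) := by
  intro m n h
  induction m generalizing n with
  | zero =>
    cases n with
    | zero => rfl
    | succ n => simp [tower, T, pair] at h
  | succ m ih =>
    cases n with
    | zero => simp [tower, T, pair] at h
    | succ n => rw [ih (pair_inj.mp h).2]

theorem betaEq_evalAt_F_tower_succ (t : ℕ → Lam) (n : ℕ) :
    app (evalAt F) (tower t (n + 1)) ≃β tower t n :=
  calc
    app (evalAt F) (tower t (n + 1)) ≃β app (tower t (n + 1)) F := betaEq_evalAt_app _ _
    _ ≃β app (app F (t n)) (tower t n) := betaEq_pair_app _ _ _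
    _ ≃β tower t n := betaEq_F_app _ _

theorem betaEq_evalAt_tower_zero (K : Lam) (t : ℕ → Lam) : app (evalAt K) (tower t 0) ≃β T :=
  (betaEq_evalAt_app K _).trans (betaEq_const_app T K)

theorem betaEq_evalAt_const_tower_succ (t : ℕ → Lam) (n : ℕ) :
    app (evalAt (lam (lam F))) (tower t (n + 1)) ≃β F :=
  calc
    app (evalAt (lam (lam F))) (tower t (n + 1)) ≃β app (tower t (n + 1)) (lam (lam F)) :=
      betaEq_evalAt_app _ _
    _ ≃β app (app (lam (lam F)) (t n)) (tower t n) := betaEq_pair_app _ _ _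
    _ ≃β app (lam F) (tower t n) := (betaEq_const_app (lam F) _).app_left _
    _ ≃β F := betaEq_const_app F _

theorem betaEq_of_tower_succ_betaEq {t u : ℕ → Lam} {n : ℕ}
    (h : tower t (n + 1) ≃β tower u (n + 1)) : t n ≃β u n := by
  have top (v : ℕ → Lam) : app (tower v (n + 1)) T ≃β v n :=
    (betaEq_pair_app _ _ _).trans (betaEq_T_app _ _)
  exact (top t).symm.trans ((h.app_left T).trans (top u))

/-- `S` is a successor for the sequence `d`; it is not required to be closed. -/
def IsSuccessor (S : Lam) (d : ℕ → Lam) : Prop := ∀ n, app S (d n) ≃β d (n + 1)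

theorem IsSuccessor.betaEq {S : Lam} {d d' : ℕ → Lam} (hd : IsSuccessor S d)
    (hd' : IsSuccessor S d') (h₀ : d 0 ≃β d' 0) (n : ℕ) : d n ≃β d' n := by
  induction n with
  | zero => exact h₀
  | succ n ih => exact (hd n).symm.trans ((ih.app_right S).trans (hd' n))

theorem IsSuccessor.betaEq_of_tower {S : Lam} {t u : ℕ → Lam} (ht : IsSuccessor S (tower t))
    (hu : IsSuccessor S (tower u)) (n : ℕ) : t n ≃β u n :=
  betaEq_of_tower_succ_betaEq (ht.betaEq hu (BetaEq.refl _) (n + 1))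

/-! ### Countability -/

/-- A Gödel numbering of the λ-terms. -/
def godelNumber : Lam → ℕ
  | var n => Nat.pair 0 n
  | app M N => Nat.pair 1 (Nat.pair M.godelNumber N.godelNumber)
  | lam M => Nat.pair 2 M.godelNumber

theorem godelNumber_injective : Function.Injective godelNumber := by
  intro M N h
  induction M generalizing N with
  | var m => cases N <;> simp_all [godelNumber]
  | app M₁ M₂ ih₁ ih₂ =>
    cases N with
    | app N₁ N₂ =>
      simp only [godelNumber, Nat.pair_eq_pair] at h
      rw [ih₁ h.2.1, ih₂ h.2.2]
    | _ => simp [godelNumber] at h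
  | lam M ih =>
    cases N with
    | lam N =>
      simp only [godelNumber, Nat.pair_eq_pair] at h
      rw [ih h.2]
    | _ => simp [godelNumber] at h

instance : Countable Lam := godelNumber_injective.countable

/-- The booleans as λ-terms. -/
def ofBool : Bool → Lam
  | true => T
  | false => F

theorem closed_ofBool : ∀ b, Closed (ofBool b)
  | true => closed_T
  | false => closed_F

theorem isBetaEtaNormal_ofBool : ∀ b, IsBetaEtaNormal (ofBool b)
  | true => isBetaEtaNormal_T
  | false => isBetaEtaNormal_F

theorem eq_of_ofBool_betaEq {b c : Bool} (h : ofBool b ≃β ofBool c) : b = c := by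
  match b, c with
  | true, true | false, false => rfl
  | true, false => exact absurd h not_betaEq_T_F
  | false, true => exact absurd h.symm not_betaEq_T_F

theorem countable_setOf_exists_isSuccessor :
    {a : ℕ → Bool | ∃ S, IsSuccessor S (tower (ofBool ∘ a))}.Countable := by
  rw [Set.ofPred_exists]
  refine Set.countable_iUnion fun S => Set.Subsingleton.countable fun a ha b hb => ?_
  exact funext fun n => eq_of_ofBool_betaEq (ha.betaEq_of_tower hb n)

theorem exists_forall_not_isSuccessor :
    ∃ a : ℕ → Bool, ∀ S, ¬ IsSuccessor S (tower (ofBool ∘ a)) := by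
  have : Uncountable (ℕ → Bool) :=
    Cardinal.aleph0_lt_mk_iff.mp (by simpa using Cardinal.cantor Cardinal.aleph0)
  by_contra! h
  exact Set.not_countable_univ (countable_setOf_exists_isSuccessor.mono fun a _ => h a)

end Lam

/-- There exists a numeral system (an infinite sequence of pairwise distinct closed
βη-normal λ-terms) which possesses a closed λ-term for Predecessor and a closed λ-term
for Zero Test, but no closed λ-term for Successor. -/
theorem statement10 :
    ∃ d : ℕ → Lam,
      (∀ n, Lam.Closed (d n)) ∧ (∀ n, Lam.IsBetaEtaNormal (d n)) ∧
      Function.Injective d ∧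
      (∃ P, Lam.Closed P ∧ ∀ n, Lam.BetaEq (Lam.app P (d (n + 1))) (d n)) ∧
      (∃ Z, Lam.Closed Z ∧ Lam.BetaEq (Lam.app Z (d 0)) Lam.T ∧
          ∀ n, Lam.BetaEq (Lam.app Z (d (n + 1))) Lam.F) ∧
      ¬ ∃ S, Lam.Closed S ∧ ∀ n, Lam.BetaEq (Lam.app S (d n)) (d (n + 1)) := by
  obtain ⟨a, ha⟩ := Lam.exists_forall_not_isSuccessor
  have hclosed (n : ℕ) : Lam.Closed (Lam.ofBool (a n)) := Lam.closed_ofBool (a n)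
  have hnormal (n : ℕ) : Lam.IsBetaEtaNormal (Lam.ofBool (a n)) := Lam.isBetaEtaNormal_ofBool (a n)
  refine ⟨Lam.tower (Lam.ofBool ∘ a), Lam.closed_tower hclosed,
    Lam.isBetaEtaNormal_tower hclosed hnormal, Lam.tower_injective _, ?_, ?_, ?_⟩
  · exact ⟨Lam.evalAt Lam.F, Lam.closed_F.evalAt, Lam.betaEq_evalAt_F_tower_succ _⟩
  · exact ⟨Lam.evalAt (Lam.lam (Lam.lam Lam.F)), Lam.closed_F.lam.lam.evalAt,
      Lam.betaEq_evalAt_tower_zero _ _, Lam.betaEq_evalAt_const_tower_succ _⟩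
  · rintro ⟨S, -, hS⟩
    exact ha S hS
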